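/- In the general normalized-output algorithm setting (x_1,…,x_N ∈ ℝ² with zero mean and coordinate variances σ² > 0 and τ² > 0; neighborhoods n(i,j), j = 0,…,K with n(i,0) = i and radii r(i); p×(K+1) matrices W_i with W_i𝟙 = 0; errors e_i^{(l)} = ‖W_i X_i^{(l)}‖² with averages ē^{(l)}; κ ≥ 1, ρ > 0; embeddings Y, Z; split-neighborhood set N₀ with r_max = max_{i∈N₀} r(i); constant c_a ≥ 0 with ‖W_i u‖² ≤ c_a(max_{j,k}(u_j − u_k))² for all i ∈ N₀ and u ∈ ℝ^{K+1}; cost Φ as before), assume additionally ē^{(1)} < √2·ē^{(2)}, ē^{(2)} > 0, κ < 2^{1/4}, and ρ² > σ²/8. If the aspect ratio c = σ/τ satisfies 4·(1 + (|N₀|/N)·c_a·r_max²/(√2·ē^{(2)})) < c, then Φ(Y) > Φ(Z). -/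

import Mathlib

/-!
Since each `W i` kills constants, the cost of `z` is
`∑ ‖W i X_i⁽¹⁾‖² / σ² + (1 / ρ²) ∑ ‖W i g(X_i⁽¹⁾)‖²`, whereas the cost of `y` is
`∑ ‖W i X_i⁽¹⁾‖² / σ² + ∑ ‖W i X_i⁽²⁾‖² / τ²`; only the second terms have to be compared.
A neighborhood outside `N0` lies on one side of the fold, so `g` acts there as multiplication by
`κ` or by `-1` and contributes at most `κ² e1 i`. On a split neighborhood, `g` is `κ`-Lipschitz, so
the bound defining `ca` gives at most `κ² ca rmax²`. Hence, with `κ² < √2` and `ebar1 < √2 ebar2`,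
the fold term is less than
`√2 (N √2 ebar2 + |N0| ca rmax²) / ρ² = 2 N ebar2 A / ρ²`,
where `A = 1 + (|N0| / N) ca rmax² / (√2 ebar2) ≥ 1`. The hypotheses `4 A < σ / τ` and
`σ² / 8 < ρ²` yield `ρ² / τ² > 2 A² ≥ 2 A`, which finishes the comparison.
-/

/-- The squared error of a weight matrix annihilating constants is translation invariant and
quadratically homogeneous. -/
lemma sum_sq_mulVec_affine {m k : ℕ} (W : Matrix (Fin m) (Fin k) ℝ)
    (hW : W.mulVec (fun _ => (1 : ℝ)) = 0) (u : Fin k → ℝ) (s b : ℝ) :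
    ∑ a, (W.mulVec (fun j => u j / s - b) a) ^ 2 = (∑ a, (W.mulVec u a) ^ 2) / s ^ 2 := by
  have h : (fun j => u j / s - b) = s⁻¹ • u - b • (fun _ => (1 : ℝ)) := by
    funext j
    simp [div_eq_inv_mul]
  rw [h, Matrix.mulVec_sub, Matrix.mulVec_smul, Matrix.mulVec_smul, hW, Finset.sum_div]
  refine Finset.sum_congr rfl fun a _ => ?_
  simp [mul_pow, div_eq_inv_mul]

lemma fold_sub_le {κ : ℝ} (hκ : 1 ≤ κ) (a b : ℝ) :
    (if 0 ≤ a then κ * a else -a) - (if 0 ≤ b then κ * b else -b) ≤ κ * |a - b| := by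
  rcases abs_cases (a - b) with ⟨h, _⟩ | ⟨h, _⟩ <;> rw [h] <;> split_ifs <;> nlinarith

/-- A neighborhood on one side of the fold contributes at most `κ²` times its original error. -/
lemma fold_error_of_not_split {m k : ℕ} (W : Matrix (Fin m) (Fin k) ℝ) {κ : ℝ} (hκ : 1 ≤ κ)
    (u : Fin k → ℝ) (hu : ¬ ((∃ j, 0 < u j) ∧ (∃ j, u j < 0))) :
    ∑ a, (W.mulVec (fun j => if 0 ≤ u j then κ * u j else -u j) a) ^ 2
      ≤ κ ^ 2 * ∑ a, (W.mulVec u a) ^ 2 := by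
  by_cases hneg : ∃ j, u j < 0
  · have hpos : ∀ j, u j ≤ 0 := fun j => not_lt.mp fun hj => hu ⟨⟨j, hj⟩, hneg⟩
    have h : (fun j => if 0 ≤ u j then κ * u j else -u j) = -u := by
      funext j
      split_ifs with hj
      · simp [le_antisymm (hpos j) hj]
      · rfl
    have h0 : 0 ≤ ∑ a, (W.mulVec u a) ^ 2 := Finset.sum_nonneg fun _ _ => sq_nonneg _
    rw [h, Matrix.mulVec_neg]
    simp only [Pi.neg_apply, neg_sq]
    nlinarith [mul_le_mul hκ hκ zero_le_one (by linarith)]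
  · push Not at hneg
    have h : (fun j => if 0 ≤ u j then κ * u j else -u j) = κ • u := by
      funext j
      simp [hneg j]
    rw [h, Matrix.mulVec_smul, Finset.mul_sum]
    simp [mul_pow]

/-- The final comparison: `S` is the fold error, `D` stands for `ca rmax²` and `q` for `|N0|`. -/
lemma fold_term_lt {m q σ τ ρ κ E₁ E₂ D S : ℝ} (hm : 0 < m) (hτ : 0 < τ)
    (hρ : 0 < ρ) (hE₂ : 0 < E₂) (hD : 0 ≤ D) (hq : 0 ≤ q) (hE : E₁ < √2 * E₂) (hκ : 0 < κ)
    (hκ2 : κ ^ 2 < √2) (hρσ : ρ ^ 2 > σ ^ 2 / 8)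
    (hc : 4 * (1 + q / m * D / (√2 * E₂)) < σ / τ) (hS : S ≤ κ ^ 2 * (m * E₁ + q * D)) :
    S / ρ ^ 2 < m * E₂ / τ ^ 2 := by
  have h22 : √2 * √2 = (2 : ℝ) := Real.mul_self_sqrt zero_le_two
  obtain ⟨A, hA⟩ : ∃ A, A = 1 + q / m * D / (√2 * E₂) := ⟨_, rfl⟩
  have hA1 : 1 ≤ A := hA ▸ le_add_of_nonneg_right (by positivity)
  have hA0 : 0 < A := by linarith
  have hAB : m * (√2 * E₂) + q * D = m * (√2 * E₂) * A := by
    rw [hA]; field_simp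
  have hlt : S < 2 * m * E₂ * A := by
    calc S ≤ κ ^ 2 * (m * E₁ + q * D) := hS
      _ < κ ^ 2 * (m * (√2 * E₂) + q * D) := by gcongr
      _ ≤ √2 * (m * (√2 * E₂) + q * D) := by gcongr
      _ = (√2 * √2) * m * E₂ * A := by rw [hAB]; ring
      _ = 2 * m * E₂ * A := by rw [h22]
  rw [← hA] at hc
  have hστ : 4 * A * τ < σ := (lt_div_iff₀ hτ).1 hc
  have hρA : 2 * A * τ ^ 2 ≤ ρ ^ 2 := by
    have h16 : (4 * A * τ) ^ 2 < σ ^ 2 := pow_lt_pow_left₀ hστ (by positivity) two_ne_zero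
    have hAA : A * τ ^ 2 ≤ A ^ 2 * τ ^ 2 :=
      mul_le_mul_of_nonneg_right (le_self_pow₀ hA1 two_ne_zero) (sq_nonneg τ)
    linarith [mul_pow (4 * A) τ 2, mul_pow 4 A 2]
  calc S / ρ ^ 2 < 2 * m * E₂ * A / ρ ^ 2 := by gcongr
    _ ≤ m * E₂ / τ ^ 2 := by
      rw [div_le_div_iff₀ (by positivity) (by positivity)]
      have := mul_le_mul_of_nonneg_left hρA (mul_pos hm hE₂).le
      linarith


/-- Corollary, general normalized-output algorithms: under `ē⁽¹⁾ < √2·ē⁽²⁾`,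
`ē⁽²⁾ > 0`, `κ < 2^{1/4}` and `ρ² > σ²/8`, if the aspect ratio `c = σ/τ` satisfies
`4·(1 + (|N₀|/N)·c_a·r_max²/(√2·ē⁽²⁾)) < c` then `Φ(Y) > Φ(Z)`. -/
theorem stmt_4 (N K p : ℕ) (hN : 0 < N) (hK : 0 < K) (hp : 0 < p)
    (x : Fin N → ℝ × ℝ)
    (hmean1 : ∑ i, (x i).1 = 0) (hmean2 : ∑ i, (x i).2 = 0)
    (σ τ : ℝ) (hσ : 0 < σ) (hτ : 0 < τ)
    (hvar1 : (1 / (N : ℝ)) * ∑ i, ((x i).1)^2 = σ^2)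
    (hvar2 : (1 / (N : ℝ)) * ∑ i, ((x i).2)^2 = τ^2)
    (n : Fin N → Fin (K+1) → Fin N) (hn0 : ∀ i, n i 0 = i)
    (r : Fin N → ℝ)
    (hr : ∀ i, r i = ⨆ jk : Fin (K+1) × Fin (K+1),
      Real.sqrt (((x (n i jk.1)).1 - (x (n i jk.2)).1)^2
        + ((x (n i jk.1)).2 - (x (n i jk.2)).2)^2))
    (W : Fin N → Matrix (Fin p) (Fin (K+1)) ℝ)
    (hW1 : ∀ i, (W i).mulVec (fun _ => (1 : ℝ)) = 0)
    (e1 e2 : Fin N → ℝ)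
    (he1 : ∀ i, e1 i = ∑ a, ((W i).mulVec (fun j => (x (n i j)).1) a)^2)
    (he2 : ∀ i, e2 i = ∑ a, ((W i).mulVec (fun j => (x (n i j)).2) a)^2)
    (ebar1 ebar2 : ℝ)
    (hebar1 : ebar1 = (1 / (N : ℝ)) * ∑ i, e1 i)
    (hebar2 : ebar2 = (1 / (N : ℝ)) * ∑ i, e2 i)
    (κ ρ : ℝ) (hκ : 1 ≤ κ) (hρ : 0 < ρ)
    (g : ℝ → ℝ) (hg : ∀ s, g s = if 0 ≤ s then κ * s else -s)
    (zbar : ℝ) (hzbar : zbar = (1 / (N : ℝ)) * ∑ i, g ((x i).1) / ρ)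
    (y z : Fin N → ℝ × ℝ)
    (hy : ∀ i, y i = ((x i).1 / σ, (x i).2 / τ))
    (hz : ∀ i, z i = ((x i).1 / σ, g ((x i).1) / ρ - zbar))
    (N0 : Finset (Fin N))
    (hN0 : ∀ i, i ∈ N0 ↔ ((∃ j, 0 < (x (n i j)).1) ∧ (∃ j, (x (n i j)).1 < 0)))
    (rmax : ℝ)
    (hrmax : rmax = if h : N0.Nonempty then N0.sup' h r else 0)
    (ca : ℝ) (hca0 : 0 ≤ ca)
    (hca : ∀ i ∈ N0, ∀ u : Fin (K+1) → ℝ,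
      ∑ a, ((W i).mulVec u a)^2
        ≤ ca * (⨆ jk : Fin (K+1) × Fin (K+1), (u jk.1 - u jk.2))^2)
    (Φ : (Fin N → ℝ × ℝ) → ℝ)
    (hΦ : ∀ M, Φ M = ∑ i,
      (∑ a, ((W i).mulVec (fun j => (M (n i j)).1) a)^2
        + ∑ a, ((W i).mulVec (fun j => (M (n i j)).2) a)^2))
    (he12 : ebar1 < Real.sqrt 2 * ebar2) (he2pos : 0 < ebar2)
    (hκ4 : κ < (2 : ℝ) ^ ((1 : ℝ) / 4))
    (hρσ : ρ^2 > σ^2 / 8)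
    (hc : 4 * (1 + ((N0.card : ℝ) / (N : ℝ)) * ca * rmax^2 / (Real.sqrt 2 * ebar2)) < σ / τ) :
    Φ y > Φ z := by
  have hNR : (0 : ℝ) < N := by exact_mod_cast hN
  have hκ0 : 0 < κ := by linarith
  set G : Fin N → ℝ := fun i => ∑ a, ((W i).mulVec (fun j => g (x (n i j)).1) a) ^ 2 with hG
  have hΦy : Φ y = (∑ i, e1 i) / σ ^ 2 + (∑ i, e2 i) / τ ^ 2 := by
    rw [hΦ, Finset.sum_add_distrib, Finset.sum_div, Finset.sum_div]
    congr 1 <;> refine Finset.sum_congr rfl fun i _ => ?_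
    · rw [he1, ← sum_sq_mulVec_affine (W i) (hW1 i) _ σ 0]
      simp [hy]
    · rw [he2, ← sum_sq_mulVec_affine (W i) (hW1 i) _ τ 0]
      simp [hy]
  have hΦz : Φ z = (∑ i, e1 i) / σ ^ 2 + (∑ i, G i) / ρ ^ 2 := by
    rw [hΦ, Finset.sum_add_distrib, Finset.sum_div, Finset.sum_div]
    congr 1 <;> refine Finset.sum_congr rfl fun i _ => ?_
    · rw [he1, ← sum_sq_mulVec_affine (W i) (hW1 i) _ σ 0]
      simp [hz]
    · rw [hG, ← sum_sq_mulVec_affine (W i) (hW1 i) _ ρ zbar]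
      simp [hz]
  have he1nn : ∀ i, 0 ≤ e1 i := fun i => by
    rw [he1]; exact Finset.sum_nonneg fun _ _ => sq_nonneg _
  have hGout : ∀ i, i ∉ N0 → G i ≤ κ ^ 2 * e1 i := fun i hi => by
    have h := fold_error_of_not_split (W i) hκ (fun j => (x (n i j)).1)
      (fun hs => hi ((hN0 i).2 hs))
    simpa only [hG, hg, he1] using h
  have hGin : ∀ i ∈ N0, G i ≤ κ ^ 2 * (ca * rmax ^ 2) := fun i hi => by
    have hri : r i ≤ rmax := by
      rw [hrmax, dif_pos ⟨i, hi⟩]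
      exact Finset.le_sup' r hi
    have hdist : ∀ j k, |(x (n i j)).1 - (x (n i k)).1| ≤ r i := fun j k => by
      rw [hr]
      refine le_trans ?_ (le_ciSup (Set.finite_range _).bddAbove (j, k))
      exact Real.abs_le_sqrt (le_add_of_nonneg_right (sq_nonneg _))
    have hle : (⨆ jk : Fin (K+1) × Fin (K+1),
        (g (x (n i jk.1)).1 - g (x (n i jk.2)).1)) ≤ κ * rmax := by
      refine ciSup_le fun jk => ?_
      rw [hg, hg]
      refine (fold_sub_le hκ _ _).trans ?_
      exact mul_le_mul_of_nonneg_left ((hdist _ _).trans hri) hκ0.le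
    have hge : 0 ≤ (⨆ jk : Fin (K+1) × Fin (K+1),
        (g (x (n i jk.1)).1 - g (x (n i jk.2)).1)) :=
      le_ciSup_of_le (Set.finite_range _).bddAbove (0, 0) (by simp)
    calc G i ≤ _ := hca i hi (fun j => g (x (n i j)).1)
      _ ≤ ca * (κ * rmax) ^ 2 := mul_le_mul_of_nonneg_left (pow_le_pow_left₀ hge hle 2) hca0
      _ = κ ^ 2 * (ca * rmax ^ 2) := by ring
  have hGsum : ∑ i, G i ≤ κ ^ 2 * (∑ i, e1 i + N0.card * (ca * rmax ^ 2)) := by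
    have hb : ∀ i, G i ≤ κ ^ 2 * (e1 i + if i ∈ N0 then ca * rmax ^ 2 else 0) := fun i => by
      split_ifs with hi
      · have := hGin i hi
        have := mul_nonneg (sq_nonneg κ) (he1nn i)
        linarith
      · simpa using hGout i hi
    refine (Finset.sum_le_sum fun i _ => hb i).trans_eq ?_
    rw [← Finset.mul_sum, Finset.sum_add_distrib]
    simp
  have hs1 : ∑ i, e1 i = N * ebar1 := by rw [hebar1]; field_simp
  have hs2 : ∑ i, e2 i = N * ebar2 := by rw [hebar2]; field_simp
  have hκ2 : κ ^ 2 < √2 := by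
    calc κ ^ 2 < ((2 : ℝ) ^ ((1 : ℝ) / 4)) ^ 2 := pow_lt_pow_left₀ hκ4 hκ0.le two_ne_zero
      _ = √2 := by
        rw [← Real.rpow_natCast, ← Real.rpow_mul zero_le_two, Real.sqrt_eq_rpow]
        norm_num
  rw [gt_iff_lt, hΦy, hΦz, hs2]
  rw [hs1] at hGsum
  exact add_lt_add_right
    (fold_term_lt hNR hτ hρ he2pos (by positivity) (Nat.cast_nonneg _) he12 hκ0 hκ2
      hρσ (by simpa only [mul_assoc] using hc) hGsum) _
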